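/- (Theorem 5, capacitive case, Huang) Let N ≥ 2, β > 0, C > 0, and consider the Josephson junction array with pure capacitive load: β φ_k'' + φ_k' + sin(φ_k) + (C/N) Σ_{j=1}^N φ_j'' = I for k = 1, …, N. If I > 1 + 2C/(β + C), then this system admits no semirotor solution: there is no solution in which some nonempty proper subset of the junctions follows a running function ψ₁ of period T while the remaining junctions follow a genuinely T-periodic function ψ₂. -/

import Mathlib

open Real

/-- `ψ` is a running function of period `T`: `ψ (t + T) = ψ t + 2π` for all `t`. -/
def IsRunning (ψ : ℝ → ℝ) (T : ℝ) : Prop :=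
  ∀ t : ℝ, ψ (t + T) = ψ t + 2 * Real.pi

/-- The family of junction waveforms of a semirotor: the junctions in `S` follow `ψ₁`
and the remaining junctions follow `ψ₂`. -/
def semiFam (N : ℕ) (S : Finset (Fin N)) (ψ₁ ψ₂ : ℝ → ℝ) : Fin N → ℝ → ℝ :=
  fun j t => if j ∈ S then ψ₁ t else ψ₂ t

/-- A shift by `T` that changes a function by a constant leaves its derivative unchanged. -/
lemma deriv_shift {f : ℝ → ℝ} {T c : ℝ} (h : ∀ t, f (t + T) = f t + c) (t : ℝ) :
    deriv f (t + T) = deriv f t := by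
  rw [← deriv_comp_add_const, show (fun x => f (x + T)) = fun x => f x + c from funext h]
  simp

/-- **Theorem 5, capacitive case (Huang).** For the Josephson junction array with pure
capacitive load, `β φ_k'' + φ_k' + sin (φ_k) + (C/N) ∑_j φ_j'' = I`, if
`I > 1 + 2C/(β + C)` then no semirotor solution exists: there is no solution in which
the junctions in some nonempty proper subset follow a running function `ψ₁` of period
`T` while the remaining junctions follow a `T`-periodic function `ψ₂`. -/
theorem huang_no_semirotor_capacitive (N : ℕ) (hN : 2 ≤ N) (β C I : ℝ)
    (hβ : 0 < β) (hC : 0 < C) (hI : 1 + 2 * C / (β + C) < I) :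
    ¬ ∃ (S : Finset (Fin N)) (ψ₁ ψ₂ : ℝ → ℝ) (T : ℝ),
        S.Nonempty ∧ S ≠ Finset.univ ∧ 0 < T ∧
        ContDiff ℝ 2 ψ₁ ∧ ContDiff ℝ 2 ψ₂ ∧
        IsRunning ψ₁ T ∧ (∀ t : ℝ, ψ₂ (t + T) = ψ₂ t) ∧
        (∀ k : Fin N, ∀ t : ℝ,
          β * deriv (deriv (semiFam N S ψ₁ ψ₂ k)) t + deriv (semiFam N S ψ₁ ψ₂ k) t +
            Real.sin (semiFam N S ψ₁ ψ₂ k t) +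
            (C / (N : ℝ)) * ∑ j : Fin N, deriv (deriv (semiFam N S ψ₁ ψ₂ j)) t = I) := by
  rintro ⟨S, ψ₁, ψ₂, T, -, hS, hT, h1, h2, hr, hp, heq⟩
  obtain ⟨k, hk⟩ : ∃ k, k ∉ S := by
    by_contra hcon
    push Not at hcon
    exact hS (Finset.eq_univ_iff_forall.2 hcon)
  have hfam : ∀ j, semiFam N S ψ₁ ψ₂ j = ψ₁ ∨ semiFam N S ψ₁ ψ₂ j = ψ₂ := by
    intro j
    by_cases hj : j ∈ S
    · left; funext t; simp [semiFam, hj]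
    · right; funext t; simp [semiFam, hj]
  have hkf : semiFam N S ψ₁ ψ₂ k = ψ₂ := by funext t; simp [semiFam, hk]
  have hcd : ∀ j, ContDiff ℝ 2 (semiFam N S ψ₁ ψ₂ j) := by
    intro j
    rcases hfam j with h | h <;> rw [h] <;> assumption
  have hper : ∀ j t, deriv (semiFam N S ψ₁ ψ₂ j) (t + T) = deriv (semiFam N S ψ₁ ψ₂ j) t := by
    intro j t
    rcases hfam j with h | h <;> rw [h]
    · exact deriv_shift hr t
    · exact deriv_shift (c := 0) (by simpa using hp) t
  have hkT : semiFam N S ψ₁ ψ₂ k (0 + T) = semiFam N S ψ₁ ψ₂ k 0 := by rw [hkf]; exact hp 0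
  have hkeq := heq k
  generalize semiFam N S ψ₁ ψ₂ = φ at *
  have hd1 : ∀ j t, HasDerivAt (φ j) (deriv (φ j) t) t := fun j t =>
    ((hcd j).differentiable (by norm_num) t).hasDerivAt
  have hd2 : ∀ j t, HasDerivAt (deriv (φ j)) (deriv (deriv (φ j)) t) t := fun j t => by
    have h : ContDiff ℝ (1 + 1) (φ j) := by simpa [one_add_one_eq_two] using hcd j
    exact ((contDiff_succ_iff_deriv.1 h).2.2.differentiable (by norm_num) t).hasDerivAt
  have hF : ∀ t, HasDerivAt
      (fun t => β * deriv (φ k) t + φ k t + (C / (N : ℝ)) * ∑ j, deriv (φ j) t)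
      (β * deriv (deriv (φ k)) t + deriv (φ k) t + (C / (N : ℝ)) * ∑ j, deriv (deriv (φ j)) t)
      t := fun t =>
    (((hd2 k t).const_mul β).add (hd1 k t)).add
      ((HasDerivAt.fun_sum fun j _ => hd2 j t).const_mul _)
  have hI1 : 1 < I := by
    have : 0 < 2 * C / (β + C) := by positivity
    linarith
  have hmono : StrictMono
      (fun t => β * deriv (φ k) t + φ k t + (C / (N : ℝ)) * ∑ j, deriv (φ j) t) := by
    apply strictMono_of_deriv_pos
    intro t
    rw [(hF t).deriv]
    linarith [hkeq t, Real.sin_le_one (φ k t)]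
  have hlt := hmono (show (0 : ℝ) < 0 + T by linarith)
  simp only [hper, hkT] at hlt
  exact lt_irrefl _ hlt
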